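/- Let (M, Ω, V) be a graded von Neumann algebra with modular conjugation J. Then there exists a unique maximal central projection p ∈ Z(M)^γ with the property that there exists a partial isometry u_p ∈ Z(M_p, V_p) with u_p* u_p = u_p u_p* = p, where M_p = pMp and V_p = pVp. Moreover V_p = u_p J u_p J, and the twisted center decomposes as Z(M, V) = Z(M_p, V_p) ⊕ Z(M_{p⊥}, V_{p⊥}) = u_p · Z(M_p) ⊕ {0}, where p⊥ = 1 − p. -/

import Mathlib

open scoped InnerProductSpace ComplexOrder

noncomputable section

variable {H : Type*} [NormedAddCommGroup H] [InnerProductSpace ℂ H] [CompleteSpace H]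

/-- A graded von Neumann algebra in standard form: a von Neumann algebra `M` with a cyclic
and separating vector `Ω`, the associated modular data `(J, Δ^{it})` (characterized by the
Tomita-Takesaki relations below), and a `ℤ₂`-grading `V`. -/
structure GradedVN (H : Type*) [NormedAddCommGroup H] [InnerProductSpace ℂ H]
    [CompleteSpace H] where
  M : VonNeumannAlgebra H
  Ω : H
  cyclic : Dense {ξ : H | ∃ x ∈ M, x Ω = ξ}
  separating : ∀ x ∈ M, x Ω = 0 → x = 0
  /-- the modular conjugation (an antiunitary involution) -/
  J : H → H
  J_add : ∀ ξ η, J (ξ + η) = J ξ + J η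
  J_smul : ∀ (c : ℂ) (ξ), J (c • ξ) = starRingEnd ℂ c • J ξ
  J_inner : ∀ ξ η, ⟪J ξ, J η⟫_ℂ = ⟪η, ξ⟫_ℂ
  J_invol : ∀ ξ, J (J ξ) = ξ
  J_Ω : J Ω = Ω
  /-- the modular group `Δ^{it}` -/
  U : ℝ → H ≃ₗᵢ[ℂ] H
  U_zero : ∀ ξ, U 0 ξ = ξ
  U_add : ∀ s t ξ, U (s + t) ξ = U s (U t ξ)
  U_cont : ∀ ξ, Continuous fun t : ℝ => U t ξ
  U_Ω : ∀ t, U t Ω = Ω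
  J_U : ∀ t ξ, J (U t ξ) = U t (J ξ)
  flow_mem : ∀ t : ℝ, ∀ x ∈ M, ∃ y ∈ M, ∀ ξ, y ξ = U t (x (U (-t) ξ))
  /-- `J M J ⊆ M'` -/
  tomita : ∀ x ∈ M, ∀ y ∈ M, ∀ ξ, J (x (J (y ξ))) = y (J (x (J ξ)))
  /-- `S = J Δ^{1/2}` maps `xΩ` to `x*Ω`, expressed via analytic continuation of the
  modular group. -/
  S_cond : ∀ x ∈ M, ∀ f : ℂ → H, Differentiable ℂ f → (∀ t : ℝ, f (t : ℂ) = U t (x Ω)) →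
    J (f (-(Complex.I) / 2)) = star x Ω
  /-- the grading -/
  V : H →L[ℂ] H
  V_star : star V = V
  V_invol : ∀ ξ, V (V ξ) = ξ
  V_Ω : V Ω = Ω
  V_mem : ∀ x ∈ M, ∃ y ∈ M, ∀ ξ, y ξ = V (x (V ξ))

namespace GradedVN

variable (N : GradedVN H)

/-- The `V`-twisted center `Z(M, V) = {x ∈ M | J x* J = x V}`. -/
def twistedCenter : Set (H →L[ℂ] H) :=
  {x | x ∈ N.M ∧ ∀ ξ, N.J (star x (N.J ξ)) = x (N.V ξ)}

/-- The center `Z(M)` of `M`. -/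
def centerSet : Set (H →L[ℂ] H) :=
  {z | z ∈ N.M ∧ ∀ y ∈ N.M, z * y = y * z}

/-- The `Ad_V`-fixed points `M^γ`. -/
def gammaFixed : Set (H →L[ℂ] H) :=
  {x | x ∈ N.M ∧ ∀ ξ, N.V (x (N.V ξ)) = x ξ}

/-- The fixed points `M^α` of the modular flow. -/
def flowFixed : Set (H →L[ℂ] H) :=
  {x | x ∈ N.M ∧ ∀ (t : ℝ) (ξ), x (N.U t ξ) = N.U t (x ξ)}

/-- The centralizer `Z_Ω(M)`. -/
def centralizerSet : Set (H →L[ℂ] H) :=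
  {x | x ∈ N.M ∧ ∀ y ∈ N.M, ⟪N.Ω, x (y N.Ω)⟫_ℂ = ⟪N.Ω, y (x N.Ω)⟫_ℂ}

/-- The twisted center of the reduced algebra `(M_p, V_p)` for a central `Ad_V`-invariant
projection `p` (for such `p`, the modular conjugation of `(pMp, pΩ)` is `J` restricted
to `pH`, so the relative twisted center consists of the `p`-supported elements of `M`
satisfying the twisted-center relation). -/
def tcRel (p : H →L[ℂ] H) : Set (H →L[ℂ] H) :=
  {x | x ∈ N.M ∧ x * p = x ∧ p * x = x ∧ ∀ ξ, N.J (star x (N.J ξ)) = x (N.V ξ)}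

/-- `p` is an `Ad_V`-invariant central projection. -/
def IsCentralInvProj (p : H →L[ℂ] H) : Prop :=
  p ∈ N.centerSet ∧ star p = p ∧ p * p = p ∧ ∀ ξ, N.V (p (N.V ξ)) = p ξ

/-- `p` is an `Ad_V`-invariant central projection carrying a partial isometry in the
relative twisted center which is unitary on `pH`. -/
def HasPI (p : H →L[ℂ] H) : Prop :=
  N.IsCentralInvProj p ∧ ∃ u ∈ N.tcRel p, star u * u = p ∧ u * star u = p

/-- Asymptotically abelian modular flow: `[α_t(x), y] → 0` weakly as `t → ∞`. -/
def AsympAbelian : Prop :=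
  ∀ x ∈ N.M, ∀ y ∈ N.M, ∀ ξ η : H,
    Filter.Tendsto
      (fun t : ℝ => ⟪ξ, N.U t (x (N.U (-t) (y η))) - y (N.U t (x (N.U (-t) η)))⟫_ℂ)
      Filter.atTop (nhds 0)

/-- `V`-graded asymptotically abelian modular flow:
`[α_t(x), y]_V = α_t(x) y − (V y V) α_t(x) → 0` weakly as `t → ∞`. -/
def GradedAsympAbelian : Prop :=
  ∀ x ∈ N.M, ∀ y ∈ N.M, ∀ ξ η : H,
    Filter.Tendsto
      (fun t : ℝ =>
        ⟪ξ, N.U t (x (N.U (-t) (y η))) - N.V (y (N.V (N.U t (x (N.U (-t) η)))))⟫_ℂ)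
      Filter.atTop (nhds 0)

end GradedVN


section gaussian
set_option linter.unusedSectionVars false
open MeasureTheory Filter Topology

lemma tcd_int_exp (k c d : ℝ) (hk : 0 < k) :
    Integrable fun t : ℝ => Real.exp (-k * t ^ 2 + c * |t| + d) := by
  have h : ∀ c : ℝ, Integrable fun t : ℝ => Real.exp (-k * t ^ 2 + c * t + d) := by
    intro c
    have := (integrable_cexp_quadratic (b := (k : ℂ)) (by simpa using hk) (c : ℂ) (d : ℂ)).norm
    refine this.congr (Eventually.of_forall fun t => ?_)
    simp only [Complex.norm_exp]
    congr 1
    rw [show (-(k : ℂ) * (t : ℂ) ^ 2 + c * t + d) = ((-k * t ^ 2 + c * t + d : ℝ) : ℂ) by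
      push_cast; ring, Complex.ofReal_re]
  refine ((h c).add (h (-c))).mono' (by fun_prop) (Eventually.of_forall fun t => ?_)
  rw [Real.norm_eq_abs, Real.abs_exp]
  simp only [Pi.add_apply]
  rcases abs_cases t with ⟨h1, _⟩ | ⟨h1, _⟩ <;> rw [h1]
  · linarith [Real.exp_pos (-k * t ^ 2 + -c * t + d)]
  · have : -k * t ^ 2 + c * -t + d = -k * t ^ 2 + -c * t + d := by ring
    rw [this]
    linarith [Real.exp_pos (-k * t ^ 2 + c * t + d)]

lemma tcd_norm_gau (k : ℝ) (hk : 0 < k) (w : ℂ) (R : ℝ) (hR : ‖w‖ ≤ R) (t : ℝ) :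
    ‖Complex.exp (-k * ((t : ℂ) - w) ^ 2)‖ ≤ Real.exp (-k * t ^ 2 + 2 * k * R * |t| + k * R ^ 2) := by
  rw [Complex.norm_exp]
  apply Real.exp_le_exp.2
  have e : (-(k : ℂ) * ((t : ℂ) - w) ^ 2).re = -k * t ^ 2 + 2 * k * (w.re * t) + k * (w.im ^ 2 - w.re ^ 2) := by
    simp [pow_two, Complex.mul_re]; ring
  rw [e]
  have h1 : w.re * t ≤ R * |t| := by
    calc w.re * t ≤ |w.re * t| := le_abs_self _
      _ = |w.re| * |t| := abs_mul _ _
      _ ≤ R * |t| := by gcongr; exact (Complex.abs_re_le_norm w).trans hR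
  have h2 : w.im ^ 2 - w.re ^ 2 ≤ R ^ 2 := by
    have : |w.im| ≤ R := (Complex.abs_im_le_norm w).trans hR
    have := sq_le_sq' (by linarith [abs_le.1 this]) (abs_le.1 this).2
    nlinarith [sq_nonneg w.re]
  nlinarith [mul_le_mul_of_nonneg_left h1 hk.le, mul_le_mul_of_nonneg_left h2 hk.le]

lemma tcd_gau_integrable (k : ℝ) (hk : 0 < k) (w : ℂ) (g : ℝ → H) (hg : Continuous g) (C : ℝ)
    (hC : ∀ t, ‖g t‖ ≤ C) :
    Integrable fun t : ℝ => Complex.exp (-k * ((t : ℂ) - w) ^ 2) • g t := by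
  refine ((tcd_int_exp k (2 * k * ‖w‖) (k * ‖w‖ ^ 2) hk).mul_const C).mono'
    (by apply Continuous.aestronglyMeasurable; fun_prop) (Eventually.of_forall fun t => ?_)
  rw [norm_smul]
  exact mul_le_mul (tcd_norm_gau k hk w _ le_rfl t) (hC t) (norm_nonneg _) (Real.exp_pos _).le

/-- Gaussian mollification. -/
def tcdF (k : ℝ) (g : ℝ → H) (w : ℂ) : H := ∫ t : ℝ, Complex.exp (-k * ((t : ℂ) - w) ^ 2) • g t

lemma tcdF_diff (k : ℝ) (hk : 0 < k) (g : ℝ → H) (hg : Continuous g) (C : ℝ)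
    (hC : ∀ t, ‖g t‖ ≤ C) : Differentiable ℂ (tcdF k g) := by
  intro w
  have hC0 : 0 ≤ C := (norm_nonneg _).trans (hC 0)
  set R := ‖w‖ + 1
  have := hasDerivAt_integral_of_dominated_loc_of_deriv_le (μ := volume) (𝕜 := ℂ) (x₀ := w)
    (s := Metric.ball w 1)
    (F := fun w (t : ℝ) => Complex.exp (-k * ((t : ℂ) - w) ^ 2) • g t)
    (F' := fun w (t : ℝ) => (Complex.exp (-k * ((t : ℂ) - w) ^ 2) * (2 * k * (t - w))) • g t)
    (bound := fun t => 2 * k * C * Real.exp (-k * t ^ 2 + (2 * k * R + 1) * |t| + (k * R ^ 2 + R)))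
    (Metric.ball_mem_nhds _ one_pos)
    (Eventually.of_forall fun w => by apply Continuous.aestronglyMeasurable; fun_prop)
    (tcd_gau_integrable k hk w g hg C hC)
    (by apply Continuous.aestronglyMeasurable; fun_prop)
    (Eventually.of_forall fun t x hx => ?_)
    ((tcd_int_exp k _ _ hk).const_mul _)
    (Eventually.of_forall fun t x hx => ?_)
  · exact this.2.differentiableAt
  · have hxR : ‖x‖ ≤ R := by
      have : ‖x - w‖ < 1 := by simpa [dist_eq_norm] using hx
      have h2 := norm_add_le (x - w) w
      rw [sub_add_cancel] at h2
      simp only [R]; linarith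
    have e1 : Real.exp (-k * t ^ 2 + (2 * k * R + 1) * |t| + (k * R ^ 2 + R)) =
      Real.exp (-k * t ^ 2 + 2 * k * R * |t| + k * R ^ 2) * Real.exp (|t| + R) := by
      rw [← Real.exp_add]; congr 1; ring
    have e2 : ‖(2 * k * ((t : ℂ) - x))‖ ≤ 2 * k * Real.exp (|t| + R) := by
      rw [norm_mul, norm_mul]
      simp only [Complex.norm_real, Complex.norm_ofNat, Real.norm_eq_abs, abs_of_pos hk]
      have : ‖(t : ℂ) - x‖ ≤ |t| + R := (norm_sub_le _ _).trans (by
        simpa using hxR)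
      have h3 := Real.add_one_le_exp (|t| + R)
      gcongr
      linarith
    rw [norm_smul, norm_mul, e1]
    have := mul_le_mul (mul_le_mul (tcd_norm_gau k hk x R hxR t) e2 (norm_nonneg _) (Real.exp_pos _).le)
      (hC t) (norm_nonneg _) (by positivity)
    refine this.trans (le_of_eq (by ring))
  · apply HasDerivAt.smul_const
    have h1 : HasDerivAt (fun x : ℂ => -(k : ℂ) * ((t : ℂ) - x) ^ 2) (2 * k * (t - x)) x := by
      have := (((hasDerivAt_id x).const_sub (t : ℂ)).pow 2).const_mul (-(k : ℂ))
      convert! this using 1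
      simp; ring
    exact h1.cexp

lemma tcd_tendsto (g : ℝ → H) (hg : Continuous g) (C : ℝ) (hC : ∀ t, ‖g t‖ ≤ C) :
    ∃ c : ℝ → ℂ, ∃ k : ℝ → ℝ, (∀ᶠ n in atTop, 0 < k n) ∧
      Tendsto (fun n => c n • tcdF (k n) g 0) atTop (𝓝 (g 0)) := by
  have hi := tcd_gau_integrable 1 one_pos 0 g hg C hC
  have := Real.tendsto_integral_gaussian_smul' hi (v := (0 : ℝ)) (by
    apply Continuous.continuousAt; fun_prop)
  refine ⟨fun c => (Real.pi * c : ℂ) ^ ((Module.finrank ℝ ℝ : ℂ) / 2),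
    fun c => Real.pi ^ 2 * c + 1, ?_, ?_⟩
  rotate_left 1
  · simp only [Complex.ofReal_zero, sub_zero, ne_eq, OfNat.ofNat_ne_zero, not_false_eq_true,
      zero_pow, mul_zero, Complex.exp_zero, one_smul] at this
    refine this.congr fun c => ?_
    simp only [tcdF]
    rw [← integral_smul]
    apply integral_congr_ae
    refine Eventually.of_forall fun t => ?_
    simp only [smul_smul, mul_assoc]
    rw [← Complex.exp_add]
    congr 3
    simp only [zero_sub, norm_neg, Real.norm_eq_abs, sub_zero, ← Complex.ofReal_pow, sq_abs]
    push_cast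
    ring
  · filter_upwards [eventually_ge_atTop 0] with c hc
    positivity

lemma tcdF_shift (k : ℝ) (g : ℝ → H) (s : ℝ) (w : ℂ) :
    tcdF k (fun t => g (t + s)) w = tcdF k g (w + s) := by
  unfold tcdF
  rw [← integral_add_right_eq_self (fun t : ℝ => Complex.exp (-k * ((t : ℂ) - (w + s)) ^ 2) • g t) s]
  congr 1
  ext t
  congr 3
  push_cast; ring

lemma tcdF_sub (k : ℝ) (hk : 0 < k) (g h : ℝ → H) (hg : Continuous g) (hh : Continuous h) (C D : ℝ)
    (hC : ∀ t, ‖g t‖ ≤ C) (hD : ∀ t, ‖h t‖ ≤ D) (w : ℂ) :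
    tcdF k (fun t => g t - h t) w = tcdF k g w - tcdF k h w := by
  unfold tcdF
  rw [← integral_sub (tcd_gau_integrable k hk w g hg C hC) (tcd_gau_integrable k hk w h hh D hD)]
  simp only [smul_sub]

lemma tcdF_map (k : ℝ) (hk : 0 < k) (g : ℝ → H) (hg : Continuous g) (C : ℝ)
    (hC : ∀ t, ‖g t‖ ≤ C) (A : H →L[ℂ] H) (w : ℂ) :
    A (tcdF k g w) = tcdF k (fun t => A (g t)) w := by
  unfold tcdF
  rw [← ContinuousLinearMap.integral_comp_comm A (tcd_gau_integrable k hk w g hg C hC)]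
  simp only [map_smul]

lemma tcdF_norm_le (k : ℝ) (hk : 0 < k) (g : ℝ → H) (C : ℝ)
    (hC : ∀ t, ‖g t‖ ≤ C) (w : ℂ) :
    ‖tcdF k g w‖ ≤ (∫ t : ℝ, Real.exp (-k * t ^ 2 + (2 * k * ‖w‖) * |t| + (k * ‖w‖ ^ 2))) * C := by
  unfold tcdF
  rw [← integral_mul_const]
  refine norm_integral_le_of_norm_le ((tcd_int_exp k (2 * k * ‖w‖) (k * ‖w‖ ^ 2) hk).mul_const C)
    (Eventually.of_forall fun t => ?_)
  rw [norm_smul]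
  exact mul_le_mul (tcd_norm_gau k hk w _ le_rfl t) (hC t) (norm_nonneg _) (Real.exp_pos _).le

/-- identity theorem for entire functions agreeing on the reals -/
lemma tcd_ident {f g : ℂ → ℂ} (hf : Differentiable ℂ f) (hg : Differentiable ℂ g)
    (h : ∀ t : ℝ, f t = g t) : f = g := by
  have hf' : AnalyticOnNhd ℂ f Set.univ := fun z _ => hf.analyticAt z
  have hg' : AnalyticOnNhd ℂ g Set.univ := fun z _ => hg.analyticAt z
  refine hf'.eq_of_frequently_eq hg' (z₀ := 0) ?_
  have ht : Tendsto (fun t : ℝ => (t : ℂ)) (𝓝[≠] 0) (𝓝[≠] 0) := by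
    apply tendsto_nhdsWithin_of_tendsto_nhds_of_eventually_within
    · have : Tendsto (fun t : ℝ => (t : ℂ)) (𝓝 0) (𝓝 0) := by
        simpa using (Complex.continuous_ofReal.tendsto 0)
      exact this.mono_left nhdsWithin_le_nhds
    · filter_upwards [self_mem_nhdsWithin] with t ht
      simpa using ht
  exact ht.frequently (Eventually.frequently (Eventually.of_forall h))

/-- periodic entire function bounded on strips is constant -/
lemma tcd_periodic_const {G : ℂ → ℂ} (hG : Differentiable ℂ G) (hp : ∀ w, G (w - Complex.I) = G w)
    (B : ℂ → ℝ) (hB : Continuous B) (hb : ∀ w, ‖G w‖ ≤ B (w.im * Complex.I)) (s t : ℂ) :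
    G s = G t := by
  have hper : Function.Periodic G Complex.I := fun w => by
    have := hp (w + Complex.I); rw [add_sub_cancel_right] at this; exact this.symm
  apply hG.apply_eq_apply_of_bounded
  obtain ⟨C, hC⟩ := (isCompact_Icc (a := (0 : ℝ)) (b := 1)).exists_bound_of_continuousOn
    (f := fun y : ℝ => B (y * Complex.I)) (by apply Continuous.continuousOn; fun_prop)
  refine isBounded_iff_forall_norm_le.2 ⟨C, ?_⟩
  rintro _ ⟨w, rfl⟩
  have h1 := hper.sub_zsmul_eq (x := w) ⌊w.im⌋
  rw [← h1]
  refine (hb _).trans ?_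
  have h2 : (w - ⌊w.im⌋ • Complex.I).im = w.im - ⌊w.im⌋ := by simp
  rw [h2]
  refine (le_abs_self _).trans ?_
  refine hC _ ⟨?_, ?_⟩
  · linarith [Int.floor_le w.im]
  · linarith [Int.lt_floor_add_one w.im]

end gaussian
section modular
open MeasureTheory Filter Topology
set_option linter.unusedSectionVars false

namespace GradedVN
variable (N : GradedVN H)

lemma tcd_Uinv (t : ℝ) (ξ : H) : N.U t (N.U (-t) ξ) = ξ := by
  rw [← N.U_add, add_neg_cancel, N.U_zero]

lemma tcd_Uinv' (t : ℝ) (ξ : H) : N.U (-t) (N.U t ξ) = ξ := by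
  rw [← N.U_add, neg_add_cancel, N.U_zero]

lemma tcd_U_cont {h : ℝ → H} (hh : Continuous h) : Continuous fun t => N.U t (h t) := by
  rw [continuous_iff_continuousAt]
  intro s
  have h1 : Tendsto (fun t => N.U t (h t - h s)) (𝓝 s) (𝓝 0) := by
    rw [tendsto_zero_iff_norm_tendsto_zero]
    simp only [LinearIsometryEquiv.norm_map]
    rw [← tendsto_zero_iff_norm_tendsto_zero]
    have := (hh.tendsto s).sub_const (h s)
    simpa using this
  have h2 := h1.add ((N.U_cont (h s)).tendsto s)
  simp only [map_sub, sub_add_cancel, zero_add] at h2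
  exact h2

lemma tcd_smul_mem {x : H →L[ℂ] H} (c : ℂ) (hx : x ∈ N.M) : c • x ∈ N.M :=
  N.M.toStarSubalgebra.smul_mem (x := x) hx c

lemma tcd_mem_of_comm {x : H →L[ℂ] H} (h : ∀ y ∈ N.M.commutant, y * x = x * y) : x ∈ N.M := by
  rw [← N.M.commutant_commutant]
  exact VonNeumannAlgebra.mem_commutant_iff.2 h

lemma tcd_flow_center (s : ℝ) {z : H →L[ℂ] H} (hz : z ∈ N.centerSet) :
    ∃ y ∈ N.centerSet, ∀ ξ, y ξ = N.U s (z (N.U (-s) ξ)) := by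
  obtain ⟨y, hy, hy'⟩ := N.flow_mem s z hz.1
  refine ⟨y, ⟨hy, fun a ha => ?_⟩, hy'⟩
  obtain ⟨b, hb, hb'⟩ := N.flow_mem (-s) a ha
  ext ξ
  have h1 : ∀ η, N.U (-s) (a η) = b (N.U (-s) η) := fun η => by
    rw [hb', neg_neg, N.tcd_Uinv]
  have h2 := congrArg (fun T : H →L[ℂ] H => T (N.U (-s) ξ)) (hz.2 b hb)
  simp only [mul_apply_eq_comp] at h2 ⊢
  rw [hy', hy', h1, h2, hb', neg_neg, N.tcd_Uinv]

/-- orbit of a central vector -/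
def tcdg (z : H →L[ℂ] H) (t : ℝ) : H := N.U t (z N.Ω)

lemma tcdg_cont (z : H →L[ℂ] H) : Continuous (N.tcdg z) := N.U_cont _
lemma tcdg_norm (z : H →L[ℂ] H) (t : ℝ) : ‖N.tcdg z t‖ ≤ ‖z N.Ω‖ := by simp [tcdg]

lemma tcd_mollify (k : ℝ) (hk : 0 < k) {z : H →L[ℂ] H} (hz : z ∈ N.centerSet) :
    ∃ m ∈ N.centerSet, m N.Ω = tcdF k (N.tcdg z) 0 := by
  have hc : ∀ ξ, Continuous fun t : ℝ => N.U t (z (N.U (-t) ξ)) := fun ξ =>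
    N.tcd_U_cont (z.continuous.comp ((N.U_cont ξ).comp continuous_neg))
  have hn : ∀ ξ (t : ℝ), ‖N.U t (z (N.U (-t) ξ))‖ ≤ ‖z‖ * ‖ξ‖ := fun ξ t => by
    rw [LinearIsometryEquiv.norm_map]
    simpa using z.le_opNorm (N.U (-t) ξ)
  let m : H →L[ℂ] H := LinearMap.mkContinuous
    { toFun := fun ξ => tcdF k (fun t => N.U t (z (N.U (-t) ξ))) 0
      map_add' := fun ξ η => by
        simp only [tcdF]
        rw [← integral_add (tcd_gau_integrable k hk 0 _ (hc ξ) _ (hn ξ))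
          (tcd_gau_integrable k hk 0 _ (hc η) _ (hn η))]
        simp only [map_add, smul_add]
      map_smul' := fun c ξ => by
        simp only [tcdF, RingHom.id_apply]
        rw [← integral_smul]
        simp only [map_smul, smul_comm c] }
    ((∫ t : ℝ, Real.exp (-k * t ^ 2 + (2 * k * ‖(0 : ℂ)‖) * |t| + (k * ‖(0 : ℂ)‖ ^ 2))) * ‖z‖)
    (fun ξ => by
      rw [mul_assoc]
      exact tcdF_norm_le k hk _ _ (hn ξ) 0)
  have hm : ∀ ξ, m ξ = tcdF k (fun t => N.U t (z (N.U (-t) ξ))) 0 := fun ξ => rfl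
  have hcomm : ∀ A : H →L[ℂ] H, (∀ y ∈ N.centerSet, A * y = y * A) → A * m = m * A := by
    intro A hA
    ext ξ
    simp only [mul_apply_eq_comp, hm]
    rw [tcdF_map k hk _ (hc ξ) _ (hn ξ)]
    congr 1
    ext t
    obtain ⟨y, hy, hy'⟩ := N.tcd_flow_center t hz
    rw [← hy', ← hy']
    exact congrArg (fun T : H →L[ℂ] H => T ξ) (hA y hy)
  refine ⟨m, ⟨N.tcd_mem_of_comm fun y hy => hcomm y fun a ha => ?_, fun y hy => ?_⟩, ?_⟩
  · exact (VonNeumannAlgebra.mem_commutant_iff.1 hy a ha.1).symm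
  · exact (hcomm y fun a ha => (ha.2 y hy).symm).symm
  · rw [hm]
    congr 1
    ext t
    rw [tcdg, N.U_Ω]

lemma tcd_UF (k : ℝ) (hk : 0 < k) (z : H →L[ℂ] H) (s : ℝ) (w : ℂ) :
    N.U s (tcdF k (N.tcdg z) w) = tcdF k (N.tcdg z) (w + s) := by
  have := tcdF_map k hk _ (N.tcdg_cont z) _ (N.tcdg_norm z)
    ((N.U s).toContinuousLinearEquiv : H →L[ℂ] H) w
  rw [← tcdF_shift]
  refine (this.trans ?_)
  congr 1
  ext t
  simp only [tcdg]
  rw [add_comm, N.U_add]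
  rfl

lemma tcd_star_center {z : H →L[ℂ] H} (hz : z ∈ N.centerSet) : star z ∈ N.centerSet :=
  ⟨star_mem hz.1, fun y hy => by
    have := congrArg star (hz.2 (star y) (star_mem hy))
    simpa using this.symm⟩

lemma tcd_star_inner (x : H →L[ℂ] H) (ξ η : H) : ⟪star x ξ, η⟫_ℂ = ⟪ξ, x η⟫_ℂ := by
  rw [ContinuousLinearMap.star_eq_adjoint, ContinuousLinearMap.adjoint_inner_left]

lemma tcd_star_inner' (x : H →L[ℂ] H) (ξ η : H) : ⟪ξ, star x η⟫_ℂ = ⟪x ξ, η⟫_ℂ := by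
  rw [ContinuousLinearMap.star_eq_adjoint, ContinuousLinearMap.adjoint_inner_right]

lemma tcd_half (k : ℝ) (hk : 0 < k) {z z' : H →L[ℂ] H} (hz : z ∈ N.centerSet)
    (hz' : z' ∈ N.centerSet) :
    ⟪tcdF k (N.tcdg z') (-Complex.I / 2), tcdF k (N.tcdg z) (-Complex.I / 2)⟫_ℂ
      = ⟪tcdF k (N.tcdg z') 0, tcdF k (N.tcdg z) 0⟫_ℂ := by
  have key : ∀ z ∈ N.centerSet, ∃ m ∈ N.centerSet, m N.Ω = tcdF k (N.tcdg z) 0 ∧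
      N.J (tcdF k (N.tcdg z) (-Complex.I / 2)) = star m N.Ω := by
    intro z hz
    obtain ⟨m, hm, hm'⟩ := N.tcd_mollify k hk hz
    refine ⟨m, hm, hm', N.S_cond m hm.1 _ (tcdF_diff k hk _ (N.tcdg_cont z) _ (N.tcdg_norm z)) ?_⟩
    intro t
    rw [hm', N.tcd_UF k hk, zero_add]
  obtain ⟨m, hm, h1, h2⟩ := key z hz
  obtain ⟨m', hm', h1', h2'⟩ := key z' hz'
  rw [← N.J_inner, h2, h2', ← h1, ← h1', tcd_star_inner, ← tcd_star_inner' m']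
  have := congrArg (fun T : H →L[ℂ] H => T N.Ω) (hm.2 (star m') (star_mem hm'.1))
  simp only [mul_apply_eq_comp] at this
  rw [this]

lemma tcd_sesq (k : ℝ) (hk : 0 < k) (z z' : H →L[ℂ] H) (w v : ℂ) :
    ⟪tcdF k (N.tcdg z') (starRingEnd ℂ v), tcdF k (N.tcdg z) w⟫_ℂ
      = ⟪tcdF k (N.tcdg z') 0, tcdF k (N.tcdg z) (w - v)⟫_ℂ := by
  have hd := tcdF_diff k hk _ (N.tcdg_cont z) _ (N.tcdg_norm z)
  have hd' := tcdF_diff k hk _ (N.tcdg_cont z') _ (N.tcdg_norm z')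
  have hin : ∀ (η : H) (f : ℂ → H), Differentiable ℂ f → Differentiable ℂ fun v => ⟪η, f v⟫_ℂ :=
    fun η f hf => (innerSL ℂ η).differentiable.comp hf
  have := tcd_ident (f := fun v => ⟪tcdF k (N.tcdg z') (starRingEnd ℂ v), tcdF k (N.tcdg z) w⟫_ℂ)
    (g := fun v => ⟪tcdF k (N.tcdg z') 0, tcdF k (N.tcdg z) (w - v)⟫_ℂ) ?_ ?_ ?_
  · exact congrFun this v
  · intro v
    have h := hin (tcdF k (N.tcdg z) w) _ hd' (starRingEnd ℂ v)
    have h' := h.conj_conj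
    rw [Complex.conj_conj] at h'
    convert! h' using 1
    ext v
    simp [inner_conj_symm]
  · exact hin _ _ (hd.comp (differentiable_const w |>.sub differentiable_id))
  · intro s
    have e : tcdF k (N.tcdg z) w = N.U s (tcdF k (N.tcdg z) (w - s)) := by
      rw [N.tcd_UF k hk, sub_add_cancel]
    have e' : tcdF k (N.tcdg z') s = N.U s (tcdF k (N.tcdg z') 0) := by
      rw [N.tcd_UF k hk, zero_add]
    simp only [Complex.conj_ofReal]
    rw [e, e', LinearIsometryEquiv.inner_map_map]

lemma tcd_moll_fixed (k : ℝ) (hk : 0 < k) {z : H →L[ℂ] H} (hz : z ∈ N.centerSet) (s : ℝ) :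
    N.U s (tcdF k (N.tcdg z) 0) = tcdF k (N.tcdg z) 0 := by
  have hd := tcdF_diff k hk _ (N.tcdg_cont z) _ (N.tcdg_norm z)
  have hconst : ∀ z' ∈ N.centerSet, ∀ w : ℂ, ⟪tcdF k (N.tcdg z') 0, tcdF k (N.tcdg z) w⟫_ℂ =
      ⟪tcdF k (N.tcdg z') 0, tcdF k (N.tcdg z) 0⟫_ℂ := by
    intro z' hz' w
    have hG : Differentiable ℂ fun w => ⟪tcdF k (N.tcdg z') 0, tcdF k (N.tcdg z) w⟫_ℂ :=
      (innerSL ℂ _).differentiable.comp hd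
    have hper := tcd_ident (f := fun w => ⟪tcdF k (N.tcdg z') 0, tcdF k (N.tcdg z) (w - Complex.I)⟫_ℂ)
      (hG.comp (differentiable_id.sub (differentiable_const Complex.I))) hG (by
        intro s
        obtain ⟨y, hy, hy'⟩ := N.tcd_flow_center s hz
        have hg : N.tcdg y = fun t => N.tcdg z (t + s) := by
          ext t
          simp only [tcdg]
          rw [hy', N.U_Ω, N.U_add]
        have h := N.tcd_half k hk hy hz'
        have hc : (-Complex.I / 2) = starRingEnd ℂ (Complex.I / 2) := by
          rw [map_div₀, Complex.conj_I, map_ofNat]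
        conv at h => lhs; arg 2; rw [hc]
        rw [N.tcd_sesq k hk, hg, tcdF_shift, tcdF_shift, zero_add] at h
        rw [← h]
        congr 2
        ring)
    refine tcd_periodic_const hG (fun w => congrFun hper w)
      (fun w => ‖tcdF k (N.tcdg z') 0‖ * ‖tcdF k (N.tcdg z) w‖)
      (continuous_const.mul hd.continuous.norm) (fun w => ?_) w 0
    refine (norm_inner_le_norm _ _).trans (le_of_eq ?_)
    have : tcdF k (N.tcdg z) w = N.U w.re (tcdF k (N.tcdg z) (w.im * Complex.I)) := by
      rw [N.tcd_UF k hk, add_comm, Complex.re_add_im]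
    rw [this, LinearIsometryEquiv.norm_map]
  obtain ⟨y, hy, hy'⟩ := N.tcd_flow_center s hz
  have hg : N.tcdg y = fun t => N.tcdg z (t + s) := by
    ext t
    simp only [tcdg]
    rw [hy', N.U_Ω, N.U_add]
  have hyz : y - z ∈ N.centerSet := ⟨sub_mem hy.1 hz.1, fun a ha => by
    rw [sub_mul, mul_sub, hy.2 a ha, hz.2 a ha]⟩
  have h := hconst _ hyz s
  have e : tcdF k (N.tcdg (y - z)) 0 = tcdF k (N.tcdg z) s - tcdF k (N.tcdg z) 0 := by
    have : N.tcdg (y - z) = fun t => N.tcdg y t - N.tcdg z t := by ext t; simp [tcdg]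
    rw [this, tcdF_sub k hk _ _ (N.tcdg_cont y) (N.tcdg_cont z) _ _ (N.tcdg_norm y)
      (N.tcdg_norm z), hg, tcdF_shift, zero_add]
  rw [← sub_eq_zero, ← inner_sub_right, e, inner_self_eq_zero, sub_eq_zero] at h
  rw [N.tcd_UF k hk, zero_add, h]

lemma tcd_center_fixed {z : H →L[ℂ] H} (hz : z ∈ N.centerSet) (s : ℝ) :
    N.U s (z N.Ω) = z N.Ω := by
  obtain ⟨c, k, hk, ht⟩ := tcd_tendsto (N.tcdg z) (N.tcdg_cont z) _ (N.tcdg_norm z)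
  have e : N.tcdg z 0 = z N.Ω := N.U_zero _
  rw [e] at ht
  refine tendsto_nhds_unique ((((N.U s).continuous.tendsto _).comp ht).congr' ?_) ht
  filter_upwards [hk] with n hn
  simp only [Function.comp_apply, map_smul]
  rw [N.tcd_moll_fixed _ hn hz]

lemma tcd_J_center {z : H →L[ℂ] H} (hz : z ∈ N.centerSet) : N.J (z N.Ω) = star z N.Ω :=
  N.S_cond z hz.1 (fun _ => z N.Ω) (differentiable_const _) fun t => (N.tcd_center_fixed hz t).symm

lemma tcd_J_sub (ξ η : H) : N.J (ξ - η) = N.J ξ - N.J η := by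
  rw [sub_eq_add_neg, N.J_add, show -η = (-1 : ℂ) • η by simp, N.J_smul]
  simp [sub_eq_add_neg]

lemma tcd_J_norm (ξ : H) : ‖N.J ξ‖ = ‖ξ‖ := by
  have := N.J_inner ξ ξ
  rw [inner_self_eq_norm_sq_to_K, inner_self_eq_norm_sq_to_K] at this
  have h : ‖N.J ξ‖ ^ 2 = ‖ξ‖ ^ 2 := by exact_mod_cast this
  exact (sq_eq_sq₀ (norm_nonneg _) (norm_nonneg _)).1 h

lemma tcd_J_cont : Continuous N.J := by
  have : Isometry N.J := Isometry.of_dist_eq fun ξ η => by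
    rw [dist_eq_norm, dist_eq_norm, ← N.tcd_J_sub, N.tcd_J_norm]
  exact this.continuous

/-- `J z* J = z` for central `z`. -/
lemma tcd_JzJ {z : H →L[ℂ] H} (hz : z ∈ N.centerSet) (ξ : H) : N.J (star z (N.J ξ)) = z ξ := by
  have hs := N.tcd_star_center hz
  have := Continuous.ext_on (f := fun ξ => N.J (star z (N.J ξ))) (g := fun ξ => z ξ) N.cyclic
    (N.tcd_J_cont.comp ((star z).continuous.comp N.tcd_J_cont)) z.continuous (by
      rintro _ ⟨y, hy, rfl⟩
      simp only
      rw [N.tomita _ hs.1 y hy, N.J_Ω, N.tcd_J_center hs, star_star]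
      exact (congrArg (fun T : H →L[ℂ] H => T N.Ω) (hz.2 y hy)).symm)
  exact congrFun this ξ

end GradedVN
end modular
section algebraic
open Filter Topology
set_option linter.unusedSectionVars false

namespace GradedVN
variable (N : GradedVN H)

lemma tcd_VV : N.V * N.V = 1 := by
  ext ξ; exact N.V_invol ξ

lemma tcd_gam_mem {y : H →L[ℂ] H} (hy : y ∈ N.M) : N.V * y * N.V ∈ N.M := by
  obtain ⟨a, ha, ha'⟩ := N.V_mem y hy
  have : N.V * y * N.V = a := by ext ξ; rw [ha']; rfl
  rwa [this]

lemma tcd_gam_gam (y : H →L[ℂ] H) : N.V * (N.V * y * N.V) * N.V = y := by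
  have : N.V * (N.V * y * N.V) * N.V = (N.V * N.V) * y * (N.V * N.V) := by noncomm_ring
  rw [this, N.tcd_VV]; simp

lemma tcd_tw {x y : H →L[ℂ] H} (hx : x ∈ N.twistedCenter) (hy : y ∈ N.M) :
    x * (N.V * y * N.V) = y * x := by
  ext ξ
  have h := N.tomita _ (star_mem hx.1) y hy (N.V ξ)
  rw [hx.2, hx.2, N.V_invol] at h
  exact h

lemma tcd_tw' {x y : H →L[ℂ] H} (hx : x ∈ N.twistedCenter) (hy : y ∈ N.M) :
    (N.V * y * N.V) * star x = star x * y := by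
  have := congrArg star (N.tcd_tw hx (star_mem hy))
  simp only [star_mul, star_star, N.V_star] at this
  rw [← this]; noncomm_ring

lemma tcd_prod {x y : H →L[ℂ] H} (hx : x ∈ N.twistedCenter) (hy : y ∈ N.twistedCenter) :
    star x * y ∈ N.centerSet := by
  refine ⟨mul_mem (star_mem hx.1) hy.1, fun a ha => ?_⟩
  have hb := N.tcd_gam_mem ha
  have h1 := N.tcd_tw hy hb
  have h2 := N.tcd_tw' hx hb
  rw [N.tcd_gam_gam] at h1 h2
  rw [mul_assoc, h1, ← mul_assoc, ← h2, mul_assoc]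

lemma tcd_prod' {x y : H →L[ℂ] H} (hx : x ∈ N.twistedCenter) (hy : y ∈ N.twistedCenter) :
    x * star y ∈ N.centerSet := by
  refine ⟨mul_mem hx.1 (star_mem hy.1), fun a ha => ?_⟩
  rw [mul_assoc, ← N.tcd_tw' hy ha, ← mul_assoc, N.tcd_tw hx ha, mul_assoc]

lemma tcd_normal {x : H →L[ℂ] H} (hx : x ∈ N.twistedCenter) : star x * x = x * star x := by
  have ha := N.tcd_prod hx hx
  have hb := N.tcd_prod' hx hx
  rw [← sub_eq_zero, ← CStarRing.star_mul_self_eq_zero_iff]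
  have h1 : (star x * x) * (star x * x) = (x * star x) * (star x * x) := by
    have := hb.2 _ (star_mem hx.1)
    calc (star x * x) * (star x * x) = (star x * (x * star x)) * x := by noncomm_ring
      _ = _ := by rw [← this]; noncomm_ring
  have h2 : (x * star x) * (x * star x) = (x * star x) * (star x * x) := by
    have := ha.2 _ hx.1
    calc (x * star x) * (x * star x) = (x * (star x * x)) * star x := by noncomm_ring
      _ = (star x * x) * (x * star x) := by rw [← this]; noncomm_ring
      _ = _ := ha.2 _ hb.1
  have h3 := ha.2 _ hb.1
  simp only [star_sub, star_mul, star_star, sub_mul, mul_sub]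
  rw [h1, h2, h3]; simp

lemma tcd_Vcomm {x : H →L[ℂ] H} (hx : x ∈ N.twistedCenter) : N.V * x * N.V = x := by
  set d := N.V * x * N.V - x with hd
  have hsd : star d = N.V * star x * N.V - star x := by
    simp [hd, star_mul, N.V_star, mul_assoc]
  have h1 : x * d = 0 := by rw [hd, mul_sub, N.tcd_tw hx hx.1, sub_self]
  have h2 : x * star d = 0 := by
    rw [hsd, mul_sub, N.tcd_tw hx (star_mem hx.1), N.tcd_normal hx, sub_self]
  have h3 : N.V * star d * N.V = - star d := by
    rw [hsd, mul_sub, sub_mul, N.tcd_gam_gam]; abel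
  have h4 : (N.V * x * N.V) * star d = 0 := by
    have : (N.V * x * N.V) * star d = N.V * (x * (N.V * star d * N.V)) * N.V := by
      calc (N.V * x * N.V) * star d = (N.V * x * N.V) * star d * 1 := by simp
        _ = _ := by rw [← N.tcd_VV]; noncomm_ring
    rw [this, h3, mul_neg, h2]; simp
  have h5 : d * star d = 0 := by
    nth_rewrite 1 [hd]
    rw [sub_mul, h4, h2, sub_zero]
  rw [CStarRing.mul_star_self_eq_zero_iff] at h5
  exact sub_eq_zero.1 h5

lemma tcd_Vcomm' {x : H →L[ℂ] H} (hx : x ∈ N.twistedCenter) : N.V * x = x * N.V := by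
  calc N.V * x = (N.V * x) * (N.V * N.V) := by rw [N.tcd_VV, mul_one]
    _ = (N.V * x * N.V) * N.V := by noncomm_ring
    _ = _ := by rw [N.tcd_Vcomm hx]

lemma tcd_J_zero : N.J 0 = 0 := by
  have := N.tcd_J_sub 0 0; simpa using this

lemma tcd_zero_mem : (0 : H →L[ℂ] H) ∈ N.twistedCenter :=
  ⟨zero_mem _, fun ξ => by simp [N.tcd_J_zero]⟩

lemma tcd_add_mem {x y : H →L[ℂ] H} (hx : x ∈ N.twistedCenter) (hy : y ∈ N.twistedCenter) :
    x + y ∈ N.twistedCenter :=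
  ⟨add_mem hx.1 hy.1, fun ξ => by
    rw [star_add, add_apply, N.J_add, hx.2, hy.2]; rfl⟩

lemma tcd_mul_mem {x z : H →L[ℂ] H} (hx : x ∈ N.twistedCenter) (hz : z ∈ N.centerSet) :
    x * z ∈ N.twistedCenter :=
  ⟨mul_mem hx.1 hz.1, fun ξ => by
    rw [star_mul, mul_apply_eq_comp, ← N.J_invol (star x (N.J ξ)), N.tcd_JzJ hz, hx.2]
    exact congrArg (fun T : H →L[ℂ] H => T (N.V ξ)) (hz.2 x hx.1)⟩

lemma tcd_smul_one (c : ℂ) : c • (1 : H →L[ℂ] H) ∈ N.centerSet :=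
  ⟨N.tcd_smul_mem c (one_mem _), fun y _ => by simp⟩

lemma tcd_sub_center {y z : H →L[ℂ] H} (hy : y ∈ N.centerSet) (hz : z ∈ N.centerSet) :
    y - z ∈ N.centerSet := ⟨sub_mem hy.1 hz.1, fun a ha => by
    rw [sub_mul, mul_sub, hy.2 a ha, hz.2 a ha]⟩

lemma tcd_mul_center {y z : H →L[ℂ] H} (hy : y ∈ N.centerSet) (hz : z ∈ N.centerSet) :
    y * z ∈ N.centerSet := ⟨mul_mem hy.1 hz.1, fun a ha => by
    rw [mul_assoc, hz.2 a ha, ← mul_assoc, hy.2 a ha, mul_assoc]⟩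

lemma tcd_mem_iff {x : H →L[ℂ] H} (hx : x ∈ N.M) :
    x ∈ N.twistedCenter ↔ ∀ ξ η, ⟪x (N.J η), N.J ξ⟫_ℂ = ⟪x (N.V ξ), η⟫_ℂ := by
  have e : ∀ ξ η, ⟪N.J (star x (N.J ξ)), η⟫_ℂ = ⟪x (N.J η), N.J ξ⟫_ℂ := fun ξ η => by
    rw [← N.J_inner, N.J_invol, tcd_star_inner']
  constructor
  · intro h ξ η
    rw [← e, h.2]
  · intro h
    refine ⟨hx, fun ξ => ext_inner_right ℂ fun η => ?_⟩
    rw [e, h]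

/-- Strong limits along monotone families in the twisted center. -/
lemma tcd_limit {ι : Type*} (l : Filter ι) [l.NeBot] (x : ι → H →L[ℂ] H)
    (hx : ∀ i, x i ∈ N.twistedCenter) (hb : ∀ i ξ, ‖x i ξ‖ ≤ ‖ξ‖)
    (hm : ∀ i, ∀ᶠ j in l, ∀ ξ, ‖x i ξ‖ ^ 2 ≤ RCLike.re ⟪x i ξ, x j ξ⟫_ℂ) :
    ∃ L ∈ N.twistedCenter, ∀ ξ, Tendsto (fun i => x i ξ) l (𝓝 (L ξ)) := by
  have hcau : ∀ ξ, ∃ η, Tendsto (fun i => x i ξ) l (𝓝 η) := by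
    intro ξ
    have hne : Nonempty ι := l.nonempty_of_neBot
    have hbd : BddAbove (Set.range fun i => ‖x i ξ‖ ^ 2) := ⟨‖ξ‖ ^ 2, by
      rintro _ ⟨i, rfl⟩
      exact pow_le_pow_left₀ (norm_nonneg _) (hb i ξ) 2⟩
    have : Cauchy (map (fun i => x i ξ) l) := by
      rw [Metric.cauchy_iff]
      refine ⟨inferInstance, fun ε hε => ?_⟩
      obtain ⟨i, hi⟩ := exists_lt_of_lt_ciSup (f := fun i => ‖x i ξ‖ ^ 2)
        (b := (⨆ i, ‖x i ξ‖ ^ 2) - (ε / 2) ^ 2) (by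
          have : 0 < (ε / 2) ^ 2 := by positivity
          linarith)
      refine ⟨Metric.ball (x i ξ) (ε / 2), ?_, ?_⟩
      · rw [mem_map]
        filter_upwards [hm i] with j hj
        have h1 := hj ξ
        have h2 : ‖x j ξ‖ ^ 2 ≤ ⨆ i, ‖x i ξ‖ ^ 2 := le_ciSup hbd j
        have h3 := norm_sub_sq (𝕜 := ℂ) (x i ξ) (x j ξ)
        have h4 : ‖x i ξ - x j ξ‖ ^ 2 < (ε / 2) ^ 2 := by linarith
        have := lt_of_pow_lt_pow_left₀ 2 (by positivity) h4
        simpa [dist_eq_norm, norm_sub_rev] using this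
      · intro a ha b hb
        have := dist_triangle_right a b (x i ξ)
        rw [Metric.mem_ball] at ha hb
        linarith
    exact CompleteSpace.complete this
  choose L hL using hcau
  let T : H →L[ℂ] H := LinearMap.mkContinuous
    { toFun := L
      map_add' := fun ξ η => tendsto_nhds_unique (hL _) (by
        simpa using (hL ξ).add (hL η))
      map_smul' := fun c ξ => tendsto_nhds_unique (hL _) (by
        simpa using (hL ξ).const_smul c) } 1 (fun ξ => by
        rw [one_mul]
        exact le_of_tendsto (hL ξ).norm (Eventually.of_forall fun i => hb i ξ))
  have hT : ∀ ξ, Tendsto (fun i => x i ξ) l (𝓝 (T ξ)) := hL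
  have hTM : T ∈ N.M := N.tcd_mem_of_comm fun y hy => by
    ext ξ
    refine tendsto_nhds_unique ((y.continuous.tendsto _).comp (hT ξ)) ((hT (y ξ)).congr fun i => ?_)
    exact congrArg (fun S : H →L[ℂ] H => S ξ) (VonNeumannAlgebra.mem_commutant_iff.1 hy _ (hx i).1)
  refine ⟨T, (N.tcd_mem_iff hTM).2 fun ξ η => ?_, hT⟩
  refine tendsto_nhds_unique ((hT (N.J η)).inner tendsto_const_nhds) ?_
  refine ((hT (N.V ξ)).inner tendsto_const_nhds).congr fun i => ?_
  exact ((N.tcd_mem_iff (hx i).1).1 (hx i) ξ η).symm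

/-- one Newton step -/
def tcdStep (x : H →L[ℂ] H) : H →L[ℂ] H := x * ((1 / 2 : ℂ) • ((3 : ℂ) • 1 - star x * x))

/-- domination by a central element `≥ 1` -/
def tcdR (x y : H →L[ℂ] H) : Prop := ∃ b ∈ N.centerSet, 1 ≤ b ∧ y = x * b

lemma tcdR_refl (x : H →L[ℂ] H) : N.tcdR x x :=
  ⟨1, by simpa using N.tcd_smul_one 1, le_rfl, by simp⟩

lemma tcdR_trans {x y z : H →L[ℂ] H} (h : N.tcdR x y) (h' : N.tcdR y z) : N.tcdR x z := by
  obtain ⟨b, hb, hb1, rfl⟩ := h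
  obtain ⟨c, hc, hc1, rfl⟩ := h'
  refine ⟨b * c, N.tcd_mul_center hb hc, ?_, by rw [mul_assoc]⟩
  have h1 : 0 ≤ b := zero_le_one.trans hb1
  have h2 : 0 ≤ b * (c - 1) := Commute.mul_nonneg h1 (sub_nonneg.2 hc1)
    (by
      have : Commute b c := hb.2 c hc.1
      exact this.sub_right (Commute.one_right b))
  rw [mul_sub, mul_one, sub_nonneg] at h2
  exact hb1.trans h2

lemma tcdR_ineq {x y : H →L[ℂ] H} (hx : x ∈ N.twistedCenter) (h : N.tcdR x y) (ξ : H) :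
    ‖x ξ‖ ^ 2 ≤ RCLike.re ⟪x ξ, y ξ⟫_ℂ := by
  obtain ⟨b, hb, hb1, rfl⟩ := h
  have h0 : 0 ≤ star x * (b - 1) * x := star_left_conjugate_nonneg (sub_nonneg.2 hb1) x
  have h1 := ((ContinuousLinearMap.nonneg_iff_isPositive _).1 h0).re_inner_nonneg_right ξ
  have e : (star x * (b - 1) * x) ξ = star x ((x * b) ξ - x ξ) := by
    have : star x * (b - 1) * x = star x * (x * b - x) := by
      rw [← hb.2 x hx.1]; noncomm_ring
    rw [this]; rfl
  rw [e, tcd_star_inner', inner_sub_right, map_sub] at h1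
  have h2 : RCLike.re ⟪x ξ, x ξ⟫_ℂ = ‖x ξ‖ ^ 2 := inner_self_eq_norm_sq (𝕜 := ℂ) (x ξ)
  linarith

lemma tcd_step {x : H →L[ℂ] H} (hx : x ∈ N.twistedCenter) (h1 : star x * x ≤ 1) :
    tcdStep x ∈ N.twistedCenter ∧ star (tcdStep x) * tcdStep x ≤ 1 ∧ N.tcdR x (tcdStep x) := by
  have ha := N.tcd_prod hx hx
  set a := star x * x with had
  have ha0 : 0 ≤ a := star_mul_self_nonneg x
  have hsa : star a = a := by simp [had]
  have hbc : (1 / 2 : ℂ) • ((3 : ℂ) • 1 - a) ∈ N.centerSet := by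
    have h := N.tcd_mul_center (N.tcd_smul_one (1 / 2)) (N.tcd_sub_center (N.tcd_smul_one 3) ha)
    simpa using h
  set b := (1 / 2 : ℂ) • ((3 : ℂ) • 1 - a) with hbd
  have hsb : star b = b := by
    simp [hbd, hsa]
  have hst : tcdStep x = x * b := rfl
  refine ⟨N.tcd_mul_mem hx hbc, ?_, b, hbc, ?_, rfl⟩
  · have e : star (tcdStep x) * tcdStep x = b * a * b := by
      rw [hst, star_mul, hsb, had]; noncomm_ring
    rw [e, ← sub_nonneg]
    have e2 : 1 - b * a * b = star (1 - a) * ((1 / 4 : ℝ) • ((3 : ℝ) • 1 + (1 - a))) * (1 - a) := by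
      rw [star_sub, star_one, hsa, hbd]
      have e3 : ((1 / 4 : ℝ) • ((3 : ℝ) • (1 : H →L[ℂ] H) + (1 - a))) =
        (1 / 4 : ℂ) • ((3 : ℂ) • 1 + (1 - a)) := by
        rw [← Complex.coe_smul, ← Complex.coe_smul]; norm_num
      rw [e3]
      simp only [sub_mul, mul_sub, mul_add, add_mul, smul_mul_assoc, mul_smul_comm, smul_sub,
        smul_add, one_mul, mul_one, smul_smul]
      module
    rw [e2]
    apply star_left_conjugate_nonneg
    apply smul_nonneg (by norm_num)
    exact add_nonneg (smul_nonneg (by norm_num) zero_le_one) (sub_nonneg.2 h1)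
  · rw [← sub_nonneg]
    have : b - 1 = (1 / 2 : ℝ) • (1 - a) := by
      rw [← Complex.coe_smul, hbd]
      push_cast
      module
    rw [this]
    exact smul_nonneg (by norm_num) (sub_nonneg.2 h1)

lemma tcd_contr {x : H →L[ℂ] H} (h : star x * x ≤ 1) (ξ : H) : ‖x ξ‖ ≤ ‖ξ‖ := by
  have h1 := (CStarAlgebra.norm_le_one_iff_of_nonneg (star x * x) (star_mul_self_nonneg x)).2 h
  rw [CStarRing.norm_star_mul_self] at h1
  have h2 : ‖x‖ ≤ 1 := by nlinarith [norm_nonneg x]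
  simpa using x.le_of_opNorm_le h2 ξ

/-- partial isometries in the twisted center -/
def tcdP (u : H →L[ℂ] H) : Prop := u ∈ N.twistedCenter ∧ u * (star u * u) = u

lemma tcd_polar {x : H →L[ℂ] H} (hx : x ∈ N.twistedCenter) (h1 : star x * x ≤ 1) :
    ∃ u, N.tcdP u ∧ (∀ ξ, u ξ = 0 → x ξ = 0) ∧ ∀ q ∈ N.M, x * q = 0 → u * q = 0 := by
  let s : ℕ → H →L[ℂ] H := fun n => tcdStep^[n] x
  have hs : ∀ n, s (n + 1) = tcdStep (s n) := fun n => Function.iterate_succ_apply' _ _ _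
  have hs1 : ∀ n, s n ∈ N.twistedCenter ∧ star (s n) * s n ≤ 1 := by
    intro n
    induction n with
    | zero => exact ⟨hx, h1⟩
    | succ n ih => rw [hs]; exact ⟨(N.tcd_step ih.1 ih.2).1, (N.tcd_step ih.1 ih.2).2.1⟩
  have hR : ∀ m n, m ≤ n → N.tcdR (s m) (s n) := by
    intro m n h
    induction n, h using Nat.le_induction with
    | base => exact N.tcdR_refl _
    | succ n _ ih =>
      refine N.tcdR_trans ih ?_
      rw [hs]; exact (N.tcd_step (hs1 n).1 (hs1 n).2).2.2
  have hc : ∀ n ξ, ‖s n ξ‖ ≤ ‖ξ‖ := fun n => tcd_contr (hs1 n).2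
  obtain ⟨L, hL, hlim⟩ := N.tcd_limit atTop s (fun n => (hs1 n).1) hc
    (fun i => by
      filter_upwards [eventually_ge_atTop i] with j hj ξ
      exact N.tcdR_ineq (hs1 i).1 (hR i j hj) ξ)
  refine ⟨L, ⟨hL, ?_⟩, ?_, ?_⟩
  · have hLL : ∀ ξ, Tendsto (fun n => s n (s n ξ)) atTop (𝓝 (L (L ξ))) := by
      intro ξ
      have h0 : Tendsto (fun n => s n (s n ξ - L ξ)) atTop (𝓝 0) := by
        refine squeeze_zero_norm (fun n => hc n _) ?_
        have := ((hlim ξ).sub_const (L ξ)).norm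
        simpa using this
      have := h0.add (hlim (L ξ))
      simpa using this
    have hcomm : L * (star L * L) = star L * L * L := ((N.tcd_prod hL hL).2 L hL.1).symm
    rw [hcomm]
    ext ξ
    refine ext_inner_left ℂ fun η => ?_
    have ht1 : Tendsto (fun n => ⟪η, s (n + 1) ξ⟫_ℂ) atTop (𝓝 ⟪η, L ξ⟫_ℂ) :=
      (tendsto_const_nhds.inner (hlim ξ)).comp (tendsto_add_atTop_nat 1)
    have ht2 : Tendsto (fun n => (3 / 2 : ℂ) * ⟪η, s n ξ⟫_ℂ - (1 / 2) * ⟪s n η, s n (s n ξ)⟫_ℂ)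
        atTop (𝓝 ((3 / 2 : ℂ) * ⟪η, L ξ⟫_ℂ - (1 / 2) * ⟪L η, L (L ξ)⟫_ℂ)) :=
      ((tendsto_const_nhds.inner (hlim ξ)).const_mul _).sub
        (((hlim η).inner (hLL ξ)).const_mul _)
    have heq := tendsto_nhds_unique ht1 (ht2.congr fun n => by
      have e : s (n + 1) = (3 / 2 : ℂ) • s n - (1 / 2 : ℂ) • (star (s n) * (s n * s n)) := by
        rw [hs, tcdStep, ← mul_assoc (star (s n)), (N.tcd_prod (hs1 n).1 (hs1 n).1).2 _ (hs1 n).1.1]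
        simp only [mul_smul_comm, mul_sub, mul_one]
        module
      rw [e]
      simp only [sub_apply, smul_apply, mul_apply_eq_comp,
        inner_sub_right, inner_smul_right, tcd_star_inner'])
    simp only [mul_apply_eq_comp, tcd_star_inner']
    linear_combination 2 * heq
  · intro ξ h
    have h2 : Tendsto (fun n => ‖s n ξ‖) atTop (𝓝 0) := by simpa [h] using (hlim ξ).norm
    have h3 : ‖x ξ‖ ^ 2 ≤ ‖x ξ‖ * 0 := by
      refine ge_of_tendsto (h2.const_mul ‖x ξ‖) (Eventually.of_forall fun n => ?_)
      have h4 := N.tcdR_ineq hx (hR 0 n (Nat.zero_le n)) ξ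
      exact h4.trans (re_inner_le_norm (𝕜 := ℂ) (x ξ) (s n ξ))
    have : ‖x ξ‖ = 0 := by nlinarith [norm_nonneg (x ξ)]
    exact norm_eq_zero.1 this
  · intro q hq hxq
    ext ξ
    refine tendsto_nhds_unique (hlim (q ξ)) ?_
    refine tendsto_const_nhds.congr fun n => ?_
    obtain ⟨b, hb, -, hb'⟩ := hR 0 n (Nat.zero_le n)
    have : s n * q = 0 := by
      rw [hb', mul_assoc, hb.2 q hq, ← mul_assoc]
      change x * q * b = 0
      rw [hxq, zero_mul]
    exact (congrArg (fun T : H →L[ℂ] H => T ξ) this).symm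

lemma tcdP_idem {u : H →L[ℂ] H} (hu : N.tcdP u) : (star u * u) * (star u * u) = star u * u := by
  rw [mul_assoc, hu.2]

lemma tcdP_le {u : H →L[ℂ] H} (hu : N.tcdP u) : star u * u ≤ 1 := by
  have h : 0 ≤ star (1 - star u * u) * (1 - star u * u) := star_mul_self_nonneg _
  have e : star (1 - star u * u) * (1 - star u * u) = 1 - star u * u := by
    simp only [star_sub, star_one, star_mul, star_star, sub_mul, mul_sub, one_mul, mul_one,
      N.tcdP_idem hu]
    simp
  rw [e] at h
  exact sub_nonneg.1 h

/-- extension order on partial isometries -/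
def tcdE (u v : H →L[ℂ] H) : Prop := u = v * (star u * u)

lemma tcdE_star {u v : H →L[ℂ] H} (hu : N.tcdP u) (hv : N.tcdP v) (h : tcdE u v) :
    star u * v = star u * u ∧ (star v * v) * (star u * u) = star u * u := by
  have hpu := N.tcd_prod hu.1 hu.1
  have hpv := N.tcd_prod hv.1 hv.1
  have h1 : star u = (star u * u) * star v := by
    have := congrArg star h
    simpa [star_mul] using this
  have h2 : star u * v = (star u * u) * (star v * v) := by
    nth_rewrite 1 [h1]; noncomm_ring
  have h3 : star u * u = (star u * u) * (star v * v) := by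
    have : star u * (v * (star u * u)) = (star u * u) * (star v * v) := by
      rw [← mul_assoc, h2, mul_assoc, hpv.2 _ hpu.1, ← mul_assoc, N.tcdP_idem hu]
    rwa [← h] at this
  exact ⟨h2.trans h3.symm, by rw [hpv.2 _ hpu.1]; exact h3.symm⟩

lemma tcdE_trans {u v w : H →L[ℂ] H} (hu : N.tcdP u) (hv : N.tcdP v) (h : tcdE u v)
    (h' : tcdE v w) : tcdE u w := by
  have := (N.tcdE_star hu hv h).2
  unfold tcdE at *
  calc u = v * (star u * u) := h
    _ = w * (star v * v) * (star u * u) := by rw [← h']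
    _ = _ := by rw [mul_assoc, this]

lemma tcd_zorn : ∃ u, N.tcdP u ∧ ∀ v, N.tcdP v → tcdE u v → tcdE v u := by
  have hne : Nonempty {u // N.tcdP u} := ⟨⟨0, N.tcd_zero_mem, by simp⟩⟩
  have hch : ∀ c : Set {u // N.tcdP u}, IsChain (fun u v => tcdE u.1 v.1) c → c.Nonempty →
      ∃ ub : {u // N.tcdP u}, ∀ a ∈ c, tcdE a.1 ub.1 := by
    intro c hc hcne
    have hrefl : ∀ u : {u // N.tcdP u}, tcdE u.1 u.1 := fun u => u.2.2.symm
    have : Nonempty c := hcne.to_subtype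
    let l : Filter c := ⨅ i : c, 𝓟 {j : c | tcdE i.1.1 j.1.1}
    have hl : l.NeBot := by
      apply iInf_neBot_of_directed'
      · intro i j
        have htot : tcdE i.1.1 j.1.1 ∨ tcdE j.1.1 i.1.1 := by
          by_cases hij : i.1 = j.1
          · left; rw [hij]; exact hrefl _
          · exact hc i.2 j.2 hij
        rcases htot with h | h
        · refine ⟨j, ?_, ?_⟩
          · exact principal_mono.2 fun k hk => N.tcdE_trans i.1.2 j.1.2 h hk
          · exact le_rfl
        · refine ⟨i, ?_, ?_⟩
          · exact le_rfl
          · exact principal_mono.2 fun k hk => N.tcdE_trans j.1.2 i.1.2 h hk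
      · intro i
        exact principal_neBot_iff.2 ⟨i, hrefl i.1⟩
    have hev : ∀ i : c, ∀ᶠ j in l, tcdE i.1.1 j.1.1 := fun i =>
      mem_iInf_of_mem i (mem_principal_self _)
    obtain ⟨L, hL, hlim⟩ := N.tcd_limit l (fun i : c => i.1.1) (fun i => i.1.2.1)
      (fun i => tcd_contr (N.tcdP_le i.1.2)) (fun i => by
        filter_upwards [hev i] with j hj ξ
        have h := (N.tcdE_star i.1.2 j.1.2 hj).1
        rw [← tcd_star_inner', ← mul_apply_eq_comp, h, mul_apply_eq_comp, tcd_star_inner']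
        exact (inner_self_eq_norm_sq (𝕜 := ℂ) _).ge)
    have hub : ∀ i : c, tcdE i.1.1 L := by
      intro i
      ext ξ
      refine tendsto_nhds_unique (tendsto_const_nhds.congr' ?_) (hlim ((star i.1.1 * i.1.1) ξ))
      filter_upwards [hev i] with j hj
      exact congrArg (fun T : H →L[ℂ] H => T ξ) hj
    have haL := N.tcd_prod hL hL
    have hP : N.tcdP L := by
      refine ⟨hL, ?_⟩
      rw [← haL.2 L hL.1]
      ext ξ
      refine tendsto_nhds_unique (((star L * L).continuous.tendsto _).comp (hlim ξ)) ?_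
      refine (hlim ξ).congr fun i => ?_
      have hp := N.tcd_prod i.1.2.1 i.1.2.1
      have hi : i.1.1 = L * (star i.1.1 * i.1.1) := hub i
      have hsi : star i.1.1 = (star i.1.1 * i.1.1) * star L := by
        have := congrArg star hi
        simpa [star_mul] using this
      have h3 : star i.1.1 * i.1.1 = (star L * L) * (star i.1.1 * i.1.1) := by
        calc star i.1.1 * i.1.1 = ((star i.1.1 * i.1.1) * star L) * (L * (star i.1.1 * i.1.1)) := by
              rw [← hsi, ← hi]
          _ = ((star i.1.1 * i.1.1) * (star L * L)) * (star i.1.1 * i.1.1) := by noncomm_ring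
          _ = _ := by rw [← haL.2 _ hp.1, mul_assoc, N.tcdP_idem i.1.2]
      have h4 : (star L * L) * i.1.1 = i.1.1 := by
        rw [haL.2 _ i.1.2.1.1]
        nth_rewrite 1 [hi]
        rw [mul_assoc, ← haL.2 _ hp.1, ← h3, ← hi]
      exact (congrArg (fun T : H →L[ℂ] H => T ξ) h4).symm
    exact ⟨⟨L, hP⟩, fun a ha => hub ⟨a, ha⟩⟩
  obtain ⟨m, hm⟩ := exists_maximal_of_nonempty_chains_bounded (α := {u // N.tcdP u})
    (r := fun u v => tcdE u.1 v.1) hch (fun {a b c} h h' => N.tcdE_trans a.2 b.2 h h')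
  exact ⟨m.1, m.2, fun v hv h => hm ⟨v, hv⟩ h⟩

lemma tcd_max : ∃ u, N.tcdP u ∧ ∀ x ∈ N.twistedCenter, x * (star u * u) = x := by
  obtain ⟨u, hu, hmax⟩ := N.tcd_zorn
  refine ⟨u, hu, fun x hx => ?_⟩
  set p := star u * u with hp
  have hpc := N.tcd_prod hu.1 hu.1
  have hpp : p * p = p := N.tcdP_idem hu
  have hsp : star p = p := by simp [hp]
  have hqc : (1 - p) ∈ N.centerSet :=
    N.tcd_sub_center (by simpa using N.tcd_smul_one 1) hpc
  set c : ℂ := ((‖x * (1 - p)‖ + 1 : ℝ) : ℂ)⁻¹ with hcd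
  have hc0 : c ≠ 0 := by
    apply inv_ne_zero
    norm_cast
    positivity
  have hy : x * (1 - p) * (c • 1) ∈ N.twistedCenter :=
    N.tcd_mul_mem (N.tcd_mul_mem hx hqc) (N.tcd_smul_one c)
  set y := x * (1 - p) * (c • 1) with hyd
  have hy' : y = c • (x * (1 - p)) := by simp [hyd]
  have hyn : ‖y‖ ≤ 1 := by
    rw [hy', norm_smul, hcd, norm_inv, Complex.norm_real, Real.norm_eq_abs,
      abs_of_pos (by positivity), inv_mul_le_one₀ (by positivity)]
    linarith
  have hy1 : star y * y ≤ 1 := by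
    rw [← CStarAlgebra.norm_le_one_iff_of_nonneg _ (star_mul_self_nonneg y),
      CStarRing.norm_star_mul_self]
    nlinarith [norm_nonneg y]
  have hyp : y * p = 0 := by
    rw [hy', smul_mul_assoc, mul_assoc, sub_mul, one_mul, hpp, sub_self]; simp
  obtain ⟨v, hv, hvy, hvq⟩ := N.tcd_polar hy hy1
  have hvp : v * p = 0 := hvq p hpc.1 hyp
  have hup : u * p = u := hu.2
  have hpv : p * v = 0 := by rw [hpc.2 v hv.1.1, hvp]
  have hpu : p * u = u := by rw [hpc.2 u hu.1.1, hup]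
  have hsvp : star v * p = 0 := by rw [← hpc.2 _ (star_mem hv.1.1)]; simpa [hsp] using congrArg star hvp
  have hsup : star u * p = star u := by
    have := congrArg star hpu
    simpa [hsp] using this
  have huv : star u * v = 0 := by
    rw [← hsup, mul_assoc, hpv, mul_zero]
  have hvu : star v * u = 0 := by
    rw [← hpu, ← mul_assoc, hsvp, zero_mul]
  have hsum : star (u + v) * (u + v) = p + star v * v := by
    simp only [star_add, add_mul, mul_add, huv, hvu, hp]; abel
  have hpv' : u * (star v * v) = 0 := by
    have hpsv : p * star v = 0 := by rw [hpc.2 _ (star_mem hv.1.1), hsvp]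
    rw [← hup, mul_assoc, ← mul_assoc p, hpsv]; simp
  have hP : N.tcdP (u + v) := by
    refine ⟨N.tcd_add_mem hu.1 hv.1, ?_⟩
    rw [hsum, mul_add, add_mul, add_mul, hup, hvp, hpv', hv.2]; simp
  have hE : tcdE u (u + v) := by
    change u = (u + v) * p
    rw [add_mul, hup, hvp, add_zero]
  have hE' := hmax _ hP hE
  have hv0 : v = 0 := by
    unfold tcdE at hE'
    rw [hsum, mul_add, hup, hpv', add_zero] at hE'
    simpa using hE'
  have hy0 : y = 0 := by
    ext ξ
    exact hvy ξ (by simp [hv0])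
  rw [hy', smul_eq_zero] at hy0
  have := hy0.resolve_left hc0
  rw [mul_sub, mul_one, sub_eq_zero] at this
  exact this.symm

end GradedVN
end algebraic
theorem twisted_center_decomposition {H : Type*} [NormedAddCommGroup H]
    [InnerProductSpace ℂ H] [CompleteSpace H] (N : GradedVN H) :
    ∃ p u : H →L[ℂ] H,
      N.IsCentralInvProj p ∧
      u ∈ N.tcRel p ∧ star u * u = p ∧ u * star u = p ∧
      (∀ q : H →L[ℂ] H, N.HasPI q → q * p = q) ∧
      (∀ p' : H →L[ℂ] H, (N.HasPI p' ∧ ∀ q : H →L[ℂ] H, N.HasPI q → q * p' = q) →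
        p' = p) ∧
      (∀ ξ, p (N.V (p ξ)) = u (N.J (u (N.J ξ)))) ∧
      N.tcRel (1 - p) = {0} ∧
      (∀ x : H →L[ℂ] H, x ∈ N.twistedCenter ↔
        ∃ y ∈ N.tcRel p, ∃ w ∈ N.tcRel (1 - p), x = y + w) ∧
      N.twistedCenter =
        (fun z => u * z) '' {z | z ∈ N.centerSet ∧ z * p = z ∧ p * z = z} := by
  obtain ⟨u, hu, hmax⟩ := N.tcd_max
  have hpc := N.tcd_prod hu.1 hu.1
  have hn := N.tcd_normal hu.1
  have hpp := N.tcdP_idem hu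
  have hVu := N.tcd_Vcomm' hu.1
  have hVsu : N.V * star u = star u * N.V := by
    have := congrArg star hVu
    simpa [N.V_star] using this.symm
  obtain ⟨p, hp⟩ : ∃ p, p = star u * u := ⟨_, rfl⟩
  rw [← hp] at hpc hpp hn
  simp only [← hp] at hmax
  have hup : u * p = u := hmax u hu.1
  have hsp : star p = p := by simp [hp]
  have hVp : N.V * p = p * N.V := by
    rw [hp, ← mul_assoc, hVsu, mul_assoc, hVu, mul_assoc]
  have hVpV : ∀ ξ, N.V (p (N.V ξ)) = p ξ := fun ξ => by
    have := congrArg (fun T : H →L[ℂ] H => T (N.V ξ)) hVp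
    simp only [mul_apply_eq_comp] at this
    rw [this, N.V_invol]
  have hproj : N.IsCentralInvProj p := ⟨hpc, hsp, hpp, hVpV⟩
  have hrel : ∀ x ∈ N.twistedCenter, x ∈ N.tcRel p := fun x hx =>
    ⟨hx.1, hmax x hx, by rw [hpc.2 x hx.1, hmax x hx], hx.2⟩
  have hmx : ∀ q : H →L[ℂ] H, N.HasPI q → q * p = q := by
    rintro q ⟨_, v, hv, hv1, _⟩
    rw [← hv1, mul_assoc, hmax v ⟨hv.1, hv.2.2.2⟩]
  have hzero : N.tcRel (1 - p) = {0} := by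
    ext x
    constructor
    · intro hx
      have h1 := hx.2.1
      rw [mul_sub, mul_one, hmax x ⟨hx.1, hx.2.2.2⟩, sub_self] at h1
      exact h1.symm
    · rintro rfl
      exact ⟨zero_mem _, by simp, by simp, N.tcd_zero_mem.2⟩
  refine ⟨p, u, hproj, hrel u hu.1, hp.symm, hn.symm, hmx, ?_, ?_, hzero, ?_, ?_⟩
  · rintro p' ⟨h1, h2⟩
    have h3 := h2 p ⟨hproj, u, hrel u hu.1, hp.symm, hn.symm⟩
    have h4 := hmx p' h1
    rw [← h4, ← hpc.2 p' h1.1.1.1, h3]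
  · intro ξ
    have hJ : N.J (u (N.J ξ)) = N.V (star u ξ) := by
      refine ext_inner_right ℂ fun η => ?_
      have e1 : ⟪N.J (u (N.J ξ)), η⟫_ℂ = ⟪ξ, N.J (star u (N.J η))⟫_ℂ := by
        rw [← N.J_inner, N.J_invol, ← N.J_inner (N.J (star u (N.J η))) ξ, N.J_invol,
          GradedVN.tcd_star_inner]
      have e2 : ⟪N.V (star u ξ), η⟫_ℂ = ⟪ξ, u (N.V η)⟫_ℂ := by
        conv_lhs => rw [← N.V_star]
        rw [GradedVN.tcd_star_inner, GradedVN.tcd_star_inner]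
      rw [e1, e2, hu.1.2]
    rw [hJ]
    have e : p * (N.V * p) = u * (N.V * star u) := by
      rw [hVp, ← mul_assoc, hpp, hVsu, ← mul_assoc, ← hn]
    exact congrArg (fun T : H →L[ℂ] H => T ξ) e
  · intro x
    constructor
    · intro hx
      exact ⟨x, hrel x hx, 0, by rw [hzero]; rfl, by simp⟩
    · rintro ⟨y, hy, w, hw, rfl⟩
      exact N.tcd_add_mem ⟨hy.1, hy.2.2.2⟩ ⟨hw.1, hw.2.2.2⟩
  · ext x
    constructor
    · intro hx
      have hc := N.tcd_prod hu.1 hx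
      have hz : star u * x * p = star u * x := by rw [mul_assoc, hmax x hx]
      refine ⟨star u * x, ⟨hc, hz, by rw [hpc.2 _ hc.1, hz]⟩, ?_⟩
      change u * (star u * x) = x
      rw [← mul_assoc, ← hn, hpc.2 x hx.1, hmax x hx]
    · rintro ⟨z, ⟨hz, _⟩, rfl⟩
      exact N.tcd_mul_mem hu.1 hz

end
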